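/- The asymptotic symmetry bracket defines a Lie algebra: Let 𝔤 be the complex vector space of triples (Y, W, V) where Y, W : ℝ → ℂ are smooth 2π-periodic functions and V ∈ ℂ, equipped with the bracket [(Y₁,W₁,V₁), (Y₂,W₂,V₂)] := (Y₁Y₂′ − Y₂Y₁′, Y₁·(W₂′ + V₂/2) − Y₂·(W₁′ + V₁/2), 0). Then this bracket is bilinear, antisymmetric, and satisfies the Jacobi identity [[x,y],z] + [[y,z],x] + [[z,x],y] = 0 for all x, y, z ∈ 𝔤. -/

import Mathlib

/-!
Both function components of the bracket have the form `X₁ u₂ - X₂ u₁`: in the first one `u = Y′`,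
and in the second one `u = W′ + V/2`, the derivative of the full Weyl factor `W + V t / 2`. The
Jacobi identity for both follows from `(X Y′ - Y X′) w = X (Y w)′ - Y (X w)′`: it turns the cyclic
sum into terms of the form `± X (Y w)′`, which cancel in pairs.
-/

/-- Triples `(Y, W, V)` with `Y, W : ℝ → ℂ` and `V ∈ ℂ`, the underlying space of
the chiral half of the enhanced asymptotic symmetry algebra. -/
abbrev AsympTriple : Type := (ℝ → ℂ) × (ℝ → ℂ) × ℂ

/-- The elements of the asymptotic symmetry algebra: both function components
are smooth and `2π`-periodic. -/
def IsAsympElt (x : AsympTriple) : Prop :=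
  ContDiff ℝ (⊤ : ℕ∞) x.1 ∧ Function.Periodic x.1 (2 * Real.pi) ∧
    ContDiff ℝ (⊤ : ℕ∞) x.2.1 ∧ Function.Periodic x.2.1 (2 * Real.pi)

/-- The bracket
`[(Y₁,W₁,V₁),(Y₂,W₂,V₂)] = (Y₁Y₂′ − Y₂Y₁′, Y₁(W₂′ + V₂/2) − Y₂(W₁′ + V₁/2), 0)`. -/
noncomputable def asympBracket (x y : AsympTriple) : AsympTriple :=
  (fun t => x.1 t * deriv y.1 t - y.1 t * deriv x.1 t,
   fun t => x.1 t * (deriv y.2.1 t + y.2.2 / 2) - y.1 t * (deriv x.2.1 t + x.2.2 / 2),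
   0)

section Wronskian

variable {𝕜 A : Type*} [NontriviallyNormedField 𝕜] [NormedCommRing A] [NormedAlgebra 𝕜 A]

/-- The Wronskian `X Y′ - Y X′`, which is the coefficient of the Lie bracket of the vector fields
`X ∂` and `Y ∂` on the line. It is the first component of `asympBracket`. -/
noncomputable def wronskian (X Y : 𝕜 → A) : 𝕜 → A :=
  X * deriv Y - Y * deriv X

theorem wronskian_mul_eq {X Y w : 𝕜 → A} (hX : Differentiable 𝕜 X) (hY : Differentiable 𝕜 Y)
    (hw : Differentiable 𝕜 w) :
    wronskian X Y * w = X * deriv (Y * w) - Y * deriv (X * w) := by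
  funext t
  simp only [wronskian, Pi.mul_apply, Pi.sub_apply, deriv_mul (hY t) (hw t),
    deriv_mul (hX t) (hw t)]
  ring

theorem wronskian_mul_cyclic_sum {X Y Z u v w : 𝕜 → A}
    (hX : Differentiable 𝕜 X) (hY : Differentiable 𝕜 Y) (hZ : Differentiable 𝕜 Z)
    (hu : Differentiable 𝕜 u) (hv : Differentiable 𝕜 v) (hw : Differentiable 𝕜 w) :
    (wronskian X Y * w - Z * deriv (X * v - Y * u))
      + (wronskian Y Z * u - X * deriv (Y * w - Z * v))
      + (wronskian Z X * v - Y * deriv (Z * u - X * w)) = 0 := by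
  have deriv_sub_eq {f g : 𝕜 → A} (hf : Differentiable 𝕜 f) (hg : Differentiable 𝕜 g) :
      deriv (f - g) = deriv f - deriv g :=
    funext fun t => deriv_sub (hf t) (hg t)
  rw [wronskian_mul_eq hX hY hw, wronskian_mul_eq hY hZ hu, wronskian_mul_eq hZ hX hv,
    deriv_sub_eq (hX.mul hv) (hY.mul hu), deriv_sub_eq (hY.mul hw) (hZ.mul hv),
    deriv_sub_eq (hZ.mul hu) (hX.mul hw)]
  ring

end Wronskian

theorem deriv_smul_add_smul {𝕜 R F : Type*} [NontriviallyNormedField 𝕜] [NormedAddCommGroup F]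
    [NormedSpace 𝕜 F] [Monoid R] [DistribMulAction R F] [SMulCommClass 𝕜 R F]
    [ContinuousConstSMul R F] {f g : 𝕜 → F} (hf : Differentiable 𝕜 f) (hg : Differentiable 𝕜 g)
    (a b : R) : deriv (a • f + b • g) = a • deriv f + b • deriv g :=
  funext fun t => (((hf t).hasDerivAt.const_smul a).add ((hg t).hasDerivAt.const_smul b)).deriv

/-- The derivative `W′ + V/2` of the full Weyl factor `W + V t / 2` of a triple `(Y, W, V)`,
through which alone `W` and `V` enter the bracket. -/
noncomputable def weylRate (x : AsympTriple) : ℝ → ℂ :=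
  fun t => deriv x.2.1 t + x.2.2 / 2

theorem asympBracket_eq (x y : AsympTriple) :
    asympBracket x y = (wronskian x.1 y.1, x.1 * weylRate y - y.1 * weylRate x, 0) :=
  rfl

theorem weylRate_asympBracket (x y : AsympTriple) :
    weylRate (asympBracket x y) = deriv (x.1 * weylRate y - y.1 * weylRate x) := by
  funext t
  simp only [asympBracket_eq, weylRate, zero_div, add_zero]

theorem asympBracket_asympBracket (x y z : AsympTriple) :
    asympBracket (asympBracket x y) z =
      (wronskian x.1 y.1 * deriv z.1 - z.1 * deriv (x.1 * deriv y.1 - y.1 * deriv x.1),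
        wronskian x.1 y.1 * weylRate z - z.1 * deriv (x.1 * weylRate y - y.1 * weylRate x),
        0) := by
  rw [asympBracket_eq (asympBracket x y), weylRate_asympBracket]
  rfl

theorem asympBracket_antisymm (x y : AsympTriple) : asympBracket x y = -asympBracket y x := by
  simp only [asympBracket_eq, wronskian, Prod.neg_mk, neg_sub, neg_zero]

theorem weylRate_smul_add_smul {x y : AsympTriple} (hx : Differentiable ℝ x.2.1)
    (hy : Differentiable ℝ y.2.1) (a b : ℂ) :
    weylRate (a • x + b • y) = a • weylRate x + b • weylRate y := by
  funext t
  simp only [weylRate, Prod.snd_add, Prod.fst_add, Prod.smul_snd, Prod.smul_fst,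
    deriv_smul_add_smul hx hy, Pi.add_apply, Pi.smul_apply, smul_eq_mul]
  ring

theorem asympBracket_smul_add_smul_left {x y : AsympTriple}
    (hxY : Differentiable ℝ x.1) (hxW : Differentiable ℝ x.2.1)
    (hyY : Differentiable ℝ y.1) (hyW : Differentiable ℝ y.2.1) (z : AsympTriple) (a b : ℂ) :
    asympBracket (a • x + b • y) z = a • asympBracket x z + b • asympBracket y z := by
  simp only [asympBracket_eq, wronskian, weylRate_smul_add_smul hxW hyW, Prod.fst_add,
    Prod.smul_fst, deriv_smul_add_smul hxY hyY, Prod.smul_mk, Prod.mk_add_mk, smul_zero, add_zero,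
    Prod.mk.injEq, and_true]
  constructor <;> simp only [add_mul, mul_add, smul_mul_assoc, mul_smul_comm, smul_sub] <;> abel

theorem asympBracket_smul_add_smul_right {x y : AsympTriple}
    (hxY : Differentiable ℝ x.1) (hxW : Differentiable ℝ x.2.1)
    (hyY : Differentiable ℝ y.1) (hyW : Differentiable ℝ y.2.1) (z : AsympTriple) (a b : ℂ) :
    asympBracket z (a • x + b • y) = a • asympBracket z x + b • asympBracket z y := by
  rw [asympBracket_antisymm z, asympBracket_smul_add_smul_left hxY hxW hyY hyW,
    asympBracket_antisymm z x, asympBracket_antisymm z y, smul_neg, smul_neg, neg_add]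

/-- Triples `(Y, W, V)` whose function components are of class `Cⁿ`, not necessarily periodic. -/
def IsContDiffTriple (n : ℕ) (x : AsympTriple) : Prop :=
  ContDiff ℝ n x.1 ∧ ContDiff ℝ n x.2.1

theorem IsAsympElt.isContDiffTriple {x : AsympTriple} (hx : IsAsympElt x) (n : ℕ) :
    IsContDiffTriple n x :=
  ⟨contDiff_infty.1 hx.1 n, contDiff_infty.1 hx.2.2.1 n⟩

theorem IsContDiffTriple.differentiable_weylRate {x : AsympTriple} (hx : IsContDiffTriple 2 x) :
    Differentiable ℝ (weylRate x) :=
  hx.2.differentiable_deriv_two.add_const _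

theorem asympBracket_jacobi {x y z : AsympTriple} (hx : IsContDiffTriple 2 x)
    (hy : IsContDiffTriple 2 y) (hz : IsContDiffTriple 2 z) :
    asympBracket (asympBracket x y) z + asympBracket (asympBracket y z) x
      + asympBracket (asympBracket z x) y = 0 := by
  have hX : Differentiable ℝ x.1 := hx.1.differentiable two_ne_zero
  have hY : Differentiable ℝ y.1 := hy.1.differentiable two_ne_zero
  have hZ : Differentiable ℝ z.1 := hz.1.differentiable two_ne_zero
  simp only [asympBracket_asympBracket, Prod.mk_add_mk, add_zero]
  rw [wronskian_mul_cyclic_sum hX hY hZ hx.1.differentiable_deriv_two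
      hy.1.differentiable_deriv_two hz.1.differentiable_deriv_two,
    wronskian_mul_cyclic_sum hX hY hZ hx.differentiable_weylRate
      hy.differentiable_weylRate hz.differentiable_weylRate]
  rfl

theorem stmt_7_general :
    (∀ x y z : AsympTriple, IsContDiffTriple 1 x → IsContDiffTriple 1 y → IsContDiffTriple 1 z →
      ∀ a b : ℂ,
        asympBracket (a • x + b • y) z = a • asympBracket x z + b • asympBracket y z ∧
        asympBracket z (a • x + b • y) = a • asympBracket z x + b • asympBracket z y) ∧
    (∀ x y : AsympTriple, IsContDiffTriple 1 x → IsContDiffTriple 1 y →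
      asympBracket x y = - asympBracket y x) ∧
    (∀ x y z : AsympTriple, IsContDiffTriple 2 x → IsContDiffTriple 2 y → IsContDiffTriple 2 z →
      asympBracket (asympBracket x y) z + asympBracket (asympBracket y z) x
        + asympBracket (asympBracket z x) y = 0) := by
  refine ⟨fun x y z hx hy _ a b => ?_, fun x y _ _ => asympBracket_antisymm x y,
    fun _ _ _ => asympBracket_jacobi⟩
  have hxY : Differentiable ℝ x.1 := hx.1.differentiable one_ne_zero
  have hxW : Differentiable ℝ x.2.1 := hx.2.differentiable one_ne_zero
  have hyY : Differentiable ℝ y.1 := hy.1.differentiable one_ne_zero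
  have hyW : Differentiable ℝ y.2.1 := hy.2.differentiable one_ne_zero
  exact ⟨asympBracket_smul_add_smul_left hxY hxW hyY hyW z a b,
    asympBracket_smul_add_smul_right hxY hxW hyY hyW z a b⟩

/-- The asymptotic symmetry bracket is bilinear, antisymmetric and satisfies the
Jacobi identity on smooth `2π`-periodic triples: it defines a Lie algebra. -/
theorem stmt_7 :
    (∀ x y z : AsympTriple, IsAsympElt x → IsAsympElt y → IsAsympElt z →
      ∀ a b : ℂ,
        asympBracket (a • x + b • y) z = a • asympBracket x z + b • asympBracket y z ∧
        asympBracket z (a • x + b • y) = a • asympBracket z x + b • asympBracket z y) ∧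
    (∀ x y : AsympTriple, IsAsympElt x → IsAsympElt y →
      asympBracket x y = - asympBracket y x) ∧
    (∀ x y z : AsympTriple, IsAsympElt x → IsAsympElt y → IsAsympElt z →
      asympBracket (asympBracket x y) z + asympBracket (asympBracket y z) x
        + asympBracket (asympBracket z x) y = 0) := by
  obtain ⟨bilinear, antisymm, jacobi⟩ := stmt_7_general
  exact ⟨fun x y z hx hy hz => bilinear x y z (hx.isContDiffTriple 1) (hy.isContDiffTriple 1)
      (hz.isContDiffTriple 1),
    fun x y hx hy => antisymm x y (hx.isContDiffTriple 1) (hy.isContDiffTriple 1),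
    fun x y z hx hy hz => jacobi x y z (hx.isContDiffTriple 2) (hy.isContDiffTriple 2)
      (hz.isContDiffTriple 2)⟩
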